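/- Let $1 < p < \infty$, let $w$ be a scalar weight on $\mathbb{R}^d$, let $\mathscr{D}$ be a dyadic lattice, and let $\{\lambda_Q\}_{Q \in \mathscr{D}}$ be a non-negative sequence (finitely supported). Then $\|\sum_{Q \in \mathscr{D}} \lambda_Q \chi_Q\|_{L^p(w)} \simeq (\sum_{Q \in \mathscr{D}} \lambda_Q (\frac{1}{w(Q)} \sum_{Q' \in \mathscr{D}, Q' \subseteq Q} \lambda_{Q'} w(Q'))^{p-1} w(Q))^{1/p}$, with implicit constants depending only on $p$ and $d$ (Cascante–Ortega–Verbitsky). -/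

import Mathlib

/-!
Write `f = ∑ λ_Q χ_Q`, `m = w dx`, `A_Q = m(Q)⁻¹ ∑_{R ⊆ Q} λ_R m(R)` and
`Λ_Q = ∑_{R ⊇ Q} λ_R`. The claim is that `∫ f^p dm` is comparable to
`V = ∑ λ_Q A_Q^{p-1} m(Q)` (`innerEnergy`). Only two properties of the cubes matter: they are nested
or disjoint, and they have finite positive mass.

The members of the family containing a point form a chain, and telescoping the `p`-th powers of the
partial sums along it (`chain_sum_le`) can be done in two directions.

* From the outside in the partial sums are the constants `Λ_Q`, so `∫ f^p` is comparable to
  `W = ∑ λ_Q Λ_Q^{p-1} m(Q)` (`outerEnergy`).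
* From the inside out the partial sums are the functions `f_Q = ∑_{R ⊆ Q} λ_R χ_R`, so `∫ f^p` is
  comparable to `∑ λ_Q ∫_Q f_Q^{p-1}`. As `f_Q` has average `A_Q` on `Q`, Jensen's inequality
  bounds this last sum by `V` from above if `p ≤ 2` and from below if `p ≥ 2`.

This leaves `V ≲ W` for `p ≤ 2` and `W ≲ V` for `p ≥ 2`. Both rest on the identity
`∑_R λ_R m(R) ∑_{Q ⊇ R} λ_Q Λ_Q^{p-2} = ∑_Q λ_Q Λ_Q^{p-2} A_Q m(Q)` (`sum_swap`), whose left side is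
comparable to `W` by telescoping once more.

* If `p ≤ 2`, then `A^{p-1} ≤ Λ^{p-1} + Λ^{p-2} A` pointwise, and summing gives `V ≲ W`
  (`innerEnergy_le_outerEnergy`).
* If `p ≥ 2`, then `Λ^{p-2} A ≤ ε Λ^{p-1} + K A^{p-1}`, and the `ε`-term is absorbed into `W`
  (`outerEnergy_le_innerEnergy`).

No maximal function is needed, and the constants depend on `p` alone.
-/


open MeasureTheory ENNReal Set

noncomputable section

/-- Euclidean space `ℝ^d` as a pi type (with Lebesgue measure `volume`). -/
abbrev Rd (d : ℕ) := Fin d → ℝ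

/-- A (half-open, axis-parallel) cube in `ℝ^d`. -/
def IsCube {d : ℕ} (Q : Set (Rd d)) : Prop :=
  ∃ (a : Rd d) (l : ℝ), 0 < l ∧ Q = Set.univ.pi fun i => Set.Ico (a i) (a i + l)

/-- The dyadic subcubes of the cube with lower-left corner `a` and sidelength `l`
(obtained by repeated subdivision into `2^d` congruent subcubes). -/
def dyadicSubcubesOf {d : ℕ} (a : Rd d) (l : ℝ) : Set (Set (Rd d)) :=
  {R | ∃ (k : ℕ) (m : Fin d → ℕ), (∀ i, m i < 2 ^ k) ∧
    R = Set.univ.pi fun i => Set.Ico (a i + l * m i / 2 ^ k) (a i + l * (m i + 1) / 2 ^ k)}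

/-- An `η`-sparse family of cubes: for each `Q` in the family, the union of its proper
subcubes belonging to the family has measure at most `(1 - η)|Q|`. -/
def IsSparse {d : ℕ} (η : ℝ) (S : Set (Set (Rd d))) : Prop :=
  ∀ Q ∈ S, volume (⋃ Q' ∈ {Q' ∈ S | Q' ⊂ Q}, Q') ≤ ENNReal.ofReal (1 - η) * volume Q

/-- A dyadic lattice in `ℝ^d`. -/
structure DyadicLattice (d : ℕ) where
  cubes : Set (Set (Rd d))
  isCube : ∀ Q ∈ cubes, IsCube Q
  descendants_mem : ∀ (a : Rd d) (l : ℝ), 0 < l →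
    (Set.univ.pi fun i => Set.Ico (a i) (a i + l)) ∈ cubes →
    dyadicSubcubesOf a l ⊆ cubes
  common_ancestor : ∀ Q ∈ cubes, ∀ Q' ∈ cubes, ∃ (a : Rd d) (l : ℝ), 0 < l ∧
    (Set.univ.pi fun i => Set.Ico (a i) (a i + l)) ∈ cubes ∧
    Q ∈ dyadicSubcubesOf a l ∧ Q' ∈ dyadicSubcubesOf a l
  covers_compact : ∀ K : Set (Rd d), IsCompact K → ∃ Q ∈ cubes, K ⊆ Q

/-- A weight: a measurable, (a.e.) positive function. -/
def IsWeightOn {X : Type*} [MeasurableSpace X] (w : X → ℝ) : Prop :=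
  Measurable w ∧ ∀ x, 0 < w x

/-- `A ≥ [w]_{A_p}`: the Muckenhoupt `A_p` characteristic of `w` is at most `A`. -/
def ApBound {d : ℕ} (p : ℝ) (w : Rd d → ℝ) (A : ℝ) : Prop :=
  ∀ Q : Set (Rd d), IsCube Q →
    (⨍ x in Q, w x) * (⨍ x in Q, w x ^ (-(1 / (p - 1)))) ^ (p - 1) ≤ A

/-- The weak `L^p` quasinorm of a real-valued function w.r.t. a measure `μ`. -/
def weakNorm {X : Type*} [MeasurableSpace X] (μ : Measure X) (p : ℝ) (f : X → ℝ) : ℝ≥0∞ :=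
  ⨆ (α : ℝ) (_ : 0 < α), ENNReal.ofReal α * μ {x | α < |f x|} ^ (1 / p)

/-- The weak `L^p` quasinorm of an `ℝ≥0∞`-valued function w.r.t. a measure `μ`. -/
def weakNormE {X : Type*} [MeasurableSpace X] (μ : Measure X) (p : ℝ) (g : X → ℝ≥0∞) : ℝ≥0∞ :=
  ⨆ (α : ℝ) (_ : 0 < α), ENNReal.ofReal α * μ {x | ENNReal.ofReal α < g x} ^ (1 / p)

theorem finsum_mem_eq_of_finset {α : Type*} (S : Set α) (t : Finset α) (g : α → ℝ)
    (h : ∀ Q ∈ S, g Q ≠ 0 → Q ∈ t) (ht : ∀ Q ∈ t, Q ∈ S) :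
    ∑ᶠ Q ∈ S, g Q = ∑ Q ∈ t, g Q := by
  apply finsum_mem_eq_sum_of_inter_support_eq
  ext Q
  simp only [mem_inter_iff, Function.mem_support, Finset.mem_coe]
  exact ⟨fun ⟨a, b⟩ => ⟨h Q a b, b⟩, fun ⟨a, b⟩ => ⟨ht Q a, b⟩⟩

/-! ### Powers of partial sums along a chain -/

theorem mul_rpow_le_sub {p : ℝ} (hp : 1 ≤ p) (a b : ℝ) (ha : 0 ≤ a) (hb : 0 < b) :
    b * (a + b) ^ (p - 1) ≤ (a + b) ^ p - a ^ p := by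
  have hs : 0 < a + b := by linarith
  have h1 : (a + b) ^ p = (a + b) ^ (p - 1) * (a + b) := by
    rw [← Real.rpow_add_one hs.ne']; ring_nf
  have h2 : a ^ p ≤ (a + b) ^ (p - 1) * a := by
    rcases ha.eq_or_lt with rfl | ha'
    · rw [Real.zero_rpow (by linarith)]; simp
    · have : a ^ p = a ^ (p - 1) * a := by
        rw [← Real.rpow_add_one ha'.ne']; ring_nf
      rw [this]
      gcongr
      linarith
  rw [h1]; nlinarith

/-- Bernoulli's inequality for the exponent `p ≥ 1`, applied to `a / (a + b) = 1 - b / (a + b)`. -/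
theorem sub_le_mul_rpow {p : ℝ} (hp : 1 ≤ p) (a b : ℝ) (ha : 0 ≤ a) (hb : 0 < b) :
    (a + b) ^ p - a ^ p ≤ p * (b * (a + b) ^ (p - 1)) := by
  have hs : 0 < a + b := by linarith
  have hB := one_add_mul_self_le_rpow_one_add (s := -(b / (a + b)))
    (by rw [neg_le_neg_iff, div_le_one hs]; linarith) hp
  have e : 1 + -(b / (a + b)) = a / (a + b) := by field_simp; ring
  rw [e, Real.div_rpow ha hs.le, le_div_iff₀ (by positivity)] at hB
  have h1 : (a + b) ^ (p - 1) = (a + b) ^ p / (a + b) := by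
    rw [Real.rpow_sub_one hs.ne']
  rw [h1]
  have : (1 + p * -(b / (a + b))) * (a + b) ^ p
      = (a + b) ^ p - p * (b * ((a + b) ^ p / (a + b))) := by ring
  linarith

/-- Bernoulli's inequality for the exponent `q ≤ 1`, applied to `a / (a + b) = 1 - b / (a + b)`. -/
theorem mul_rpow_le_sub_of_le_one {q : ℝ} (hq : 0 < q) (hq1 : q ≤ 1) (a b : ℝ)
    (ha : 0 ≤ a) (hb : 0 < b) :
    b * (q * (a + b) ^ (q - 1)) ≤ (a + b) ^ q - a ^ q := by
  have hs : 0 < a + b := by linarith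
  have hB := rpow_one_add_le_one_add_mul_self (s := -(b / (a + b)))
    (by rw [neg_le_neg_iff, div_le_one hs]; linarith) hq.le hq1
  have e : 1 + -(b / (a + b)) = a / (a + b) := by field_simp; ring
  rw [e, Real.div_rpow ha hs.le, div_le_iff₀ (by positivity)] at hB
  have h1 : (a + b) ^ (q - 1) = (a + b) ^ q / (a + b) := by
    rw [Real.rpow_sub_one hs.ne']
  rw [h1]
  have : (1 + q * -(b / (a + b))) * (a + b) ^ q
      = (a + b) ^ q - b * (q * ((a + b) ^ q / (a + b))) := by ring
  linarith

open Classical in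
/-- Summation by parts along a chain: if `b * g (a + b)` is bounded by the increment of `F` from
`a` to `a + b`, then the weighted sum of `g` over the partial sums of `lam` telescopes.
The order is left general so that sets can be summed from the inside out or, through the dual
order, from the outside in. -/
theorem chain_sum_le {α : Type*} [PartialOrder α] (lam : α → ℝ) (F g : ℝ → ℝ) (hF : F 0 = 0)
    (h : ∀ a b, 0 ≤ a → 0 < b → b * g (a + b) ≤ F (a + b) - F a) (s : Finset α)
    (hs : IsChain (· ≤ ·) (s : Set α)) (hl : ∀ i ∈ s, 0 < lam i) :
    ∑ i ∈ s, lam i * g (∑ j ∈ s with j ≤ i, lam j) ≤ F (∑ i ∈ s, lam i) := by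
  induction hn : s.card generalizing s with
  | zero => simp [Finset.card_eq_zero.1 hn, hF]
  | succ n ih =>
    have hne : s.Nonempty := by rw [← Finset.card_pos]; omega
    -- Peel off the top of the chain; the partial sums below it are unaffected.
    obtain ⟨M, hM⟩ := s.exists_maximal hne
    have hle : ∀ i ∈ s, i ≤ M := fun i hi => by
      rcases hs.total hi hM.1 with h | h
      · exact h
      · exact hM.2 hi h
    have key := ih (s.erase M) (hs.mono (by simp))
      (fun i hi => hl i (Finset.mem_of_mem_erase hi)) (by rw [Finset.card_erase_of_mem hM.1]; omega)
    have e1 : ∀ i ∈ s.erase M, (s.erase M).filter (· ≤ i) = s.filter (· ≤ i) := by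
      intro i hi
      ext j
      simp only [Finset.mem_filter, Finset.mem_erase]
      refine ⟨fun h => ⟨h.1.2, h.2⟩, fun h => ⟨⟨?_, h.1⟩, h.2⟩⟩
      rintro rfl
      exact (Finset.ne_of_mem_erase hi) (le_antisymm (hle i (Finset.mem_of_mem_erase hi)) h.2)
    rw [Finset.sum_congr rfl (fun i hi => by rw [e1 i hi])] at key
    rw [← Finset.sum_erase_add _ _ hM.1, ← Finset.sum_erase_add s lam hM.1,
      Finset.filter_true_of_mem hle, ← Finset.sum_erase_add s lam hM.1]
    have := h (∑ i ∈ s.erase M, lam i) (lam M)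
      (Finset.sum_nonneg fun i hi => (hl i (Finset.mem_of_mem_erase hi)).le) (hl M hM.1)
    linarith

/-! ### Discrete energies over a laminar family -/

section Discrete

variable {X : Type*} (F : Finset (Set X)) (lam m : Set X → ℝ)

open Classical in
/-- `Λ_R`: the sum of the coefficients of the members of `F` containing `R`, i.e. the value on `R`
of the part of `∑ λ_Q χ_Q` that is constant on `R`. -/
def outerSum (R : Set X) : ℝ := ∑ Q ∈ F with R ⊆ Q, lam Q

open Classical in
/-- `m(Q) A_Q`: the total mass `∑_{R ⊆ Q} λ_R m(R)` carried by the members of `F` inside `Q`. -/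
def innerMass (Q : Set X) : ℝ := ∑ R ∈ F with R ⊆ Q, lam R * m R

/-- `A_Q`: the average over `Q` of `∑_{R ⊆ Q} λ_R χ_R`. -/
def innerAvg (Q : Set X) : ℝ := (m Q)⁻¹ * innerMass F lam m Q

open Classical in
/-- `∑_{R ⊆ Q} λ_R χ_R`, the part of `∑ λ_R χ_R` localised to `Q`. -/
def innerFun (Q : Set X) (x : X) : ℝ := ∑ R ∈ F with R ⊆ Q, lam R * R.indicator 1 x

/-- A laminar family: two members are nested or disjoint. -/
def Laminar : Prop := ∀ Q ∈ F, ∀ R ∈ F, Q ⊆ R ∨ R ⊆ Q ∨ Disjoint Q R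

/-- `∑_Q λ_Q A_Q^{p-1} m(Q)`. -/
def innerEnergy (p : ℝ) : ℝ := ∑ Q ∈ F, lam Q * innerAvg F lam m Q ^ (p - 1) * m Q

/-- `∑_R λ_R Λ_R^{p-1} m(R)`, a discrete expression comparable to `∫ (∑ λ_Q χ_Q)^p`. -/
def outerEnergy (p : ℝ) : ℝ := ∑ R ∈ F, lam R * outerSum F lam R ^ (p - 1) * m R

variable {F lam m}

theorem outerSum_pos (hl : ∀ Q ∈ F, 0 < lam Q) {R : Set X} (hR : R ∈ F) :
    0 < outerSum F lam R := by
  classical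
  exact Finset.sum_pos (fun i hi => hl i (Finset.mem_filter.1 hi).1)
    ⟨R, Finset.mem_filter.2 ⟨hR, Subset.rfl⟩⟩

theorem innerAvg_nonneg (hl : ∀ Q ∈ F, 0 < lam Q) (hm : ∀ Q ∈ F, 0 < m Q) {Q : Set X}
    (hQ : Q ∈ F) : 0 ≤ innerAvg F lam m Q := by
  classical
  refine mul_nonneg (inv_nonneg.2 (hm Q hQ).le) (Finset.sum_nonneg fun R hR => ?_)
  have := (Finset.mem_filter.1 hR).1
  exact mul_nonneg (hl R this).le (hm R this).le

theorem isChain_of_laminar (hF : Laminar F) (s : Finset (Set X)) (hs : s ⊆ F) {x : X}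
    (hx : ∀ Q ∈ s, x ∈ Q) : IsChain (· ≤ ·) (s : Set (Set X)) := by
  intro Q hQ R hR _
  rcases hF Q (hs hQ) R (hs hR) with h | h | h
  · exact Or.inl h
  · exact Or.inr h
  · exact absurd (hx R hR) (Set.disjoint_left.1 h (hx Q hQ))

open Classical in
/-- `chain_sum_le` from the outside in, along all members of `F` containing a nonempty set. -/
theorem outer_chain_sum_le (hF : Laminar F) (hl : ∀ Q ∈ F, 0 < lam Q) (G g : ℝ → ℝ)
    (hG : G 0 = 0) (h : ∀ a b, 0 ≤ a → 0 < b → b * g (a + b) ≤ G (a + b) - G a)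
    {T : Set X} (hT : T.Nonempty) :
    ∑ Q ∈ F with T ⊆ Q, lam Q * g (outerSum F lam Q) ≤ G (∑ Q ∈ F with T ⊆ Q, lam Q) := by
  obtain ⟨x, hx⟩ := hT
  have hc := isChain_of_laminar hF (F.filter (T ⊆ ·)) (Finset.filter_subset _ _) (x := x)
    (fun Q hQ => (Finset.mem_filter.1 hQ).2 hx)
  have key := chain_sum_le (α := (Set X)ᵒᵈ) lam G g hG h (F.filter (T ⊆ ·)) hc.symm
    (fun i hi => hl i (Finset.mem_filter.1 hi).1)
  refine le_trans (le_of_eq (Finset.sum_congr rfl fun Q hQ => ?_)) key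
  congr 2
  refine Finset.sum_congr (?_ : F.filter (Q ⊆ ·) = (F.filter (T ⊆ ·)).filter (Q ⊆ ·)) fun _ _ => rfl
  ext R
  simp only [Finset.mem_filter]
  exact ⟨fun h => ⟨⟨h.1, (Finset.mem_filter.1 hQ).2.trans h.2⟩, h.2⟩, fun h => ⟨h.1.1, h.2⟩⟩

open Classical in
/-- Interchange of summation: outer sums against `λ_R m(R)` are averages `A_Q`. -/
theorem sum_swap (hm : ∀ Q ∈ F, 0 < m Q) (c : Set X → ℝ) :
    ∑ R ∈ F, lam R * m R * ∑ Q ∈ F with R ⊆ Q, lam Q * c Q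
      = ∑ Q ∈ F, lam Q * c Q * innerAvg F lam m Q * m Q := by
  simp_rw [Finset.sum_filter, Finset.mul_sum]
  rw [Finset.sum_comm]
  refine Finset.sum_congr rfl fun Q hQ => ?_
  have : innerAvg F lam m Q * m Q = ∑ R ∈ F, if R ⊆ Q then lam R * m R else 0 := by
    rw [innerAvg, innerMass, Finset.sum_filter]
    field_simp [(hm Q hQ).ne']
  rw [mul_assoc, this, Finset.mul_sum]
  refine Finset.sum_congr rfl fun R _ => ?_
  split_ifs <;> ring

/-- The range `1 < p ≤ 2` of the lower bound. Since `A^{p-1} ≤ Λ^{p-1} + Λ^{p-2} A`, interchanging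
the sums and summing `λ_Q Λ_Q^{p-2}` along chains closes the estimate. -/
theorem innerEnergy_le_outerEnergy {p : ℝ} (hp : 1 < p) (hp2 : p ≤ 2) (hF : Laminar F)
    (hne : ∀ Q ∈ F, Q.Nonempty) (hl : ∀ Q ∈ F, 0 < lam Q) (hm : ∀ Q ∈ F, 0 < m Q) :
    innerEnergy F lam m p ≤ (1 + (p - 1)⁻¹) * outerEnergy F lam m p := by
  classical
  have h1 : innerEnergy F lam m p ≤ outerEnergy F lam m p +
      ∑ Q ∈ F, lam Q * outerSum F lam Q ^ (p - 1 - 1) * innerAvg F lam m Q * m Q := by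
    rw [innerEnergy, outerEnergy, ← Finset.sum_add_distrib]
    refine Finset.sum_le_sum fun Q hQ => ?_
    have hA := innerAvg_nonneg hl hm hQ
    have hL := outerSum_pos hl hQ
    have := hl Q hQ
    have := hm Q hQ
    set A := innerAvg F lam m Q
    set L := outerSum F lam Q
    have hk : A ^ (p - 1) ≤ L ^ (p - 1) + L ^ (p - 1 - 1) * A := by
      rcases le_total A L with h | h
      · have : A ^ (p - 1) ≤ L ^ (p - 1) := Real.rpow_le_rpow hA h (by linarith)
        have : 0 ≤ L ^ (p - 1 - 1) * A := by positivity
        linarith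
      · have hA' : 0 < A := hL.trans_le h
        have e : A ^ (p - 1) = A ^ (p - 1 - 1) * A := by
          rw [← Real.rpow_add_one hA'.ne']; ring_nf
        have : A ^ (p - 1 - 1) ≤ L ^ (p - 1 - 1) :=
          Real.rpow_le_rpow_of_nonpos hL h (by linarith)
        have : 0 ≤ L ^ (p - 1) := by positivity
        rw [e]; nlinarith
    calc lam Q * A ^ (p - 1) * m Q ≤ lam Q * (L ^ (p - 1) + L ^ (p - 1 - 1) * A) * m Q := by
          gcongr
      _ = _ := by ring
  rw [← sum_swap hm] at h1
  -- Along the chain above `R`, the sum of `λ_Q Λ_Q^{p-2}` telescopes to `Λ_R^{p-1} / (p - 1)`.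
  have h2 : ∑ R ∈ F, lam R * m R * ∑ Q ∈ F with R ⊆ Q, lam Q * outerSum F lam Q ^ (p - 1 - 1)
      ≤ (p - 1)⁻¹ * outerEnergy F lam m p := by
    rw [outerEnergy, Finset.mul_sum]
    refine Finset.sum_le_sum fun R hR => ?_
    have := outer_chain_sum_le hF hl (fun t => t ^ (p - 1)) (fun t => (p - 1) * t ^ (p - 1 - 1))
      (Real.zero_rpow (by linarith))
      (mul_rpow_le_sub_of_le_one (by linarith) (by linarith)) (hne R hR)
    have h3 : (p - 1) * ∑ Q ∈ F with R ⊆ Q, lam Q * outerSum F lam Q ^ (p - 1 - 1)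
        ≤ outerSum F lam R ^ (p - 1) := by
      rw [Finset.mul_sum]
      refine le_trans (le_of_eq (Finset.sum_congr rfl fun _ _ => by ring)) this
    rw [← le_inv_mul_iff₀ (by linarith)] at h3
    have := mul_pos (hl R hR) (hm R hR)
    calc _ ≤ lam R * m R * ((p - 1)⁻¹ * outerSum F lam R ^ (p - 1)) := by gcongr
      _ = _ := by ring
  linarith

/-- The range `p ≥ 2` of the upper bound. Expanding `Λ_R^{p-1}` along chains and interchanging the
sums produces `Λ_Q^{p-2} A_Q ≤ ε Λ_Q^{p-1} + K A_Q^{p-1}`; with `ε = 1 / (2 (p - 1))` the first term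
is absorbed. -/
theorem outerEnergy_le_innerEnergy {p : ℝ} (hp2 : 2 ≤ p) (hF : Laminar F)
    (hne : ∀ Q ∈ F, Q.Nonempty) (hl : ∀ Q ∈ F, 0 < lam Q) (hm : ∀ Q ∈ F, 0 < m Q) :
    outerEnergy F lam m p ≤
      (2 * (p - 1)) * (2 * (p - 1)) ^ (p - 2) * innerEnergy F lam m p := by
  classical
  have h1 : outerEnergy F lam m p ≤ (p - 1) *
      ∑ R ∈ F, lam R * m R * ∑ Q ∈ F with R ⊆ Q, lam Q * outerSum F lam Q ^ (p - 1 - 1) := by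
    rw [outerEnergy, Finset.mul_sum]
    refine Finset.sum_le_sum fun R hR => ?_
    have := outer_chain_sum_le hF hl (fun t => - t ^ (p - 1))
      (fun t => - ((p - 1) * t ^ (p - 1 - 1)))
      (by simp [Real.zero_rpow (show p - 1 ≠ 0 by linarith)])
      (fun a b ha hb => by
        have := sub_le_mul_rpow (p := p - 1) (by linarith) a b ha hb
        linarith) (hne R hR)
    have h3 : outerSum F lam R ^ (p - 1) ≤
        (p - 1) * ∑ Q ∈ F with R ⊆ Q, lam Q * outerSum F lam Q ^ (p - 1 - 1) := by
      rw [← neg_le_neg_iff, Finset.mul_sum, ← Finset.sum_neg_distrib]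
      refine le_trans (le_of_eq (Finset.sum_congr rfl fun _ _ => by ring)) this
    have := mul_pos (hl R hR) (hm R hR)
    calc _ = lam R * m R * (outerSum F lam R ^ (p - 1)) := by ring
      _ ≤ lam R * m R * ((p - 1) * _) := mul_le_mul_of_nonneg_left h3 this.le
      _ = _ := by ring
  rw [sum_swap hm] at h1
  set D := 2 * (p - 1) with hD
  have hDpos : 0 < D := by linarith
  have h2 : ∑ Q ∈ F, lam Q * outerSum F lam Q ^ (p - 1 - 1) * innerAvg F lam m Q * m Q ≤
      D⁻¹ * outerEnergy F lam m p + D ^ (p - 2) * innerEnergy F lam m p := by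
    rw [innerEnergy, outerEnergy, Finset.mul_sum, Finset.mul_sum, ← Finset.sum_add_distrib]
    refine Finset.sum_le_sum fun Q hQ => ?_
    have hA := innerAvg_nonneg hl hm hQ
    have hL := outerSum_pos hl hQ
    have := hl Q hQ
    have := hm Q hQ
    set A := innerAvg F lam m Q
    set L := outerSum F lam Q
    have hk : L ^ (p - 1 - 1) * A ≤ D⁻¹ * L ^ (p - 1) + D ^ (p - 2) * A ^ (p - 1) := by
      have n1 : 0 ≤ D⁻¹ * L ^ (p - 1) := by positivity
      have n2 : 0 ≤ D ^ (p - 2) * A ^ (p - 1) := by positivity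
      rcases le_total A (D⁻¹ * L) with h | h
      · have e : L ^ (p - 1) = L ^ (p - 1 - 1) * L := by
          rw [← Real.rpow_add_one hL.ne']; ring_nf
        have : L ^ (p - 1 - 1) * A ≤ L ^ (p - 1 - 1) * (D⁻¹ * L) := by gcongr
        have : L ^ (p - 1 - 1) * (D⁻¹ * L) = D⁻¹ * L ^ (p - 1) := by rw [e]; ring
        linarith
      · have hA' : 0 < A := lt_of_lt_of_le (by positivity) h
        have e : A ^ (p - 1) = A ^ (p - 2) * A := by
          rw [← Real.rpow_add_one hA'.ne']; ring_nf
        have h' : L ≤ D * A := (inv_mul_le_iff₀ hDpos).1 h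
        have : L ^ (p - 1 - 1) ≤ D ^ (p - 2) * A ^ (p - 2) := by
          rw [← Real.mul_rpow hDpos.le hA, show p - 1 - 1 = p - 2 by ring]
          exact Real.rpow_le_rpow hL.le h' (by linarith)
        have : L ^ (p - 1 - 1) * A ≤ D ^ (p - 2) * A ^ (p - 2) * A := by gcongr
        rw [e]; linarith
    calc _ = lam Q * (L ^ (p - 1 - 1) * A) * m Q := by ring
      _ ≤ lam Q * (D⁻¹ * L ^ (p - 1) + D ^ (p - 2) * A ^ (p - 1)) * m Q := by gcongr
      _ = _ := by ring
  have h3 := h1.trans (mul_le_mul_of_nonneg_left h2 (by linarith))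
  have h4 : (p - 1) * (D⁻¹ * outerEnergy F lam m p + D ^ (p - 2) * innerEnergy F lam m p)
      = outerEnergy F lam m p / 2 + (p - 1) * D ^ (p - 2) * innerEnergy F lam m p := by
    have : p - 1 ≠ 0 := by linarith
    rw [hD]; field_simp
  rw [h4] at h3
  calc outerEnergy F lam m p ≤ 2 * ((p - 1) * D ^ (p - 2) * innerEnergy F lam m p) := by linarith
    _ = _ := by rw [hD]; ring

end Discrete

/-! ### Comparison with the integral -/

section Integral

variable {X : Type*} {F : Finset (Set X)} {lam : Set X → ℝ}

/-- The function `∑_{Q ∈ F} λ_Q χ_Q`. -/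
def stepFun (F : Finset (Set X)) (lam : Set X → ℝ) (x : X) : ℝ :=
  ∑ Q ∈ F, lam Q * Q.indicator 1 x

open Classical in
theorem sum_mul_indicator (F : Finset (Set X)) (lam : Set X → ℝ) (c : Set X → X → ℝ) (x : X) :
    ∑ Q ∈ F, lam Q * Q.indicator (c Q) x = ∑ Q ∈ F with x ∈ Q, lam Q * c Q x := by
  rw [Finset.sum_filter]
  refine Finset.sum_congr rfl fun Q _ => ?_
  by_cases h : x ∈ Q <;> simp [h]

open Classical in
theorem stepFun_eq (F : Finset (Set X)) (lam : Set X → ℝ) (x : X) :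
    stepFun F lam x = ∑ Q ∈ F with x ∈ Q, lam Q := by
  rw [stepFun, sum_mul_indicator F lam (fun _ => 1)]
  simp

theorem stepFun_nonneg (hl : ∀ Q ∈ F, 0 < lam Q) (x : X) : 0 ≤ stepFun F lam x := by
  classical
  rw [stepFun_eq]
  exact Finset.sum_nonneg fun i hi => (hl i (Finset.mem_filter.1 hi).1).le

/-- `chain_sum_le` at a point `x`, summing over the members of `F` containing `x` from the outside
in. The partial sums are the constants `Λ_Q`. -/
theorem outer_pointwise (hF : Laminar F) (hl : ∀ Q ∈ F, 0 < lam Q) (G g : ℝ → ℝ)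
    (hG : G 0 = 0) (h : ∀ a b, 0 ≤ a → 0 < b → b * g (a + b) ≤ G (a + b) - G a) (x : X) :
    ∑ Q ∈ F, lam Q * Q.indicator (fun _ => g (outerSum F lam Q)) x ≤ G (stepFun F lam x) := by
  classical
  rw [sum_mul_indicator F lam (fun Q _ => g (outerSum F lam Q)), stepFun_eq]
  have := outer_chain_sum_le hF hl G g hG h (singleton_nonempty x)
  simpa only [singleton_subset_iff] using this

/-- `chain_sum_le` at a point `x`, summing over the members of `F` containing `x` from the inside
out. The partial sums are the values `∑_{R ⊆ Q} λ_R χ_R(x)`. -/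
theorem inner_pointwise (hF : Laminar F) (hl : ∀ Q ∈ F, 0 < lam Q) (G g : ℝ → ℝ)
    (hG : G 0 = 0) (h : ∀ a b, 0 ≤ a → 0 < b → b * g (a + b) ≤ G (a + b) - G a) (x : X) :
    ∑ Q ∈ F, lam Q * Q.indicator (fun y => g (innerFun F lam Q y)) x ≤ G (stepFun F lam x) := by
  classical
  rw [sum_mul_indicator F lam (fun Q y => g (innerFun F lam Q y)), stepFun_eq]
  have hc := isChain_of_laminar hF (F.filter (x ∈ ·)) (Finset.filter_subset _ _) (x := x)
    (fun Q hQ => (Finset.mem_filter.1 hQ).2)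
  refine le_trans (le_of_eq (Finset.sum_congr rfl fun Q hQ => ?_))
    (chain_sum_le lam G g hG h _ hc (fun i hi => hl i (Finset.mem_filter.1 hi).1))
  congr 2
  rw [innerFun, sum_mul_indicator _ lam (fun _ => 1), Finset.filter_comm]
  simp

theorem innerFun_nonneg (hl : ∀ Q ∈ F, 0 < lam Q) (Q : Set X) (x : X) :
    0 ≤ innerFun F lam Q x := by
  classical
  exact Finset.sum_nonneg fun R hR => mul_nonneg (hl R (Finset.mem_filter.1 hR).1).le
    (indicator_nonneg (fun _ _ => zero_le_one) _)

theorem innerFun_le (hl : ∀ Q ∈ F, 0 < lam Q) (Q : Set X) (x : X) :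
    innerFun F lam Q x ≤ ∑ R ∈ F, lam R := by
  classical
  refine (Finset.sum_le_sum fun R hR => ?_).trans
    (Finset.sum_le_sum_of_subset_of_nonneg (Finset.filter_subset _ _) fun R hR _ => (hl R hR).le)
  have := (hl R (Finset.mem_filter.1 hR).1).le
  exact mul_le_of_le_one_right this (indicator_le_self' (fun _ _ => zero_le_one) x)

theorem stepFun_rpow_le (hF : Laminar F) (hl : ∀ Q ∈ F, 0 < lam Q) {p : ℝ} (hp : 1 < p) (x : X) :
    stepFun F lam x ^ p ≤
      p * ∑ Q ∈ F, lam Q * Q.indicator (fun _ => outerSum F lam Q ^ (p - 1)) x := by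
  classical
  have := outer_pointwise hF hl (fun t => - t ^ p) (fun t => - (p * t ^ (p - 1)))
    (by simp [Real.zero_rpow (show p ≠ 0 by linarith)])
    (fun a b ha hb => by have := sub_le_mul_rpow hp.le a b ha hb; linarith) x
  rw [sum_mul_indicator F lam (fun Q _ => outerSum F lam Q ^ (p - 1)), Finset.mul_sum]
  rw [sum_mul_indicator F lam (fun Q _ => - (p * outerSum F lam Q ^ (p - 1)))] at this
  rw [← neg_le_neg_iff, ← Finset.sum_neg_distrib]
  exact le_trans (le_of_eq (Finset.sum_congr rfl fun _ _ => by ring)) this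

variable [MeasurableSpace X] {μ : Measure X}

theorem measurable_stepFun (hM : ∀ Q ∈ F, MeasurableSet Q) : Measurable (stepFun F lam) :=
  Finset.measurable_sum _ fun Q hQ => (measurable_one.indicator (hM Q hQ)).const_mul _

theorem measurable_innerFun (hM : ∀ Q ∈ F, MeasurableSet Q) (Q : Set X) :
    Measurable (innerFun F lam Q) := by
  classical
  exact Finset.measurable_sum _ fun R hR =>
    (measurable_one.indicator (hM R (Finset.mem_filter.1 hR).1)).const_mul _

theorem integrableOn_innerFun_rpow (hM : ∀ Q ∈ F, MeasurableSet Q) (hfin : ∀ Q ∈ F, μ Q ≠ ∞)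
    (hl : ∀ Q ∈ F, 0 < lam Q) {q : ℝ} (hq : 0 < q) {Q : Set X} (hQ : Q ∈ F) :
    IntegrableOn (fun x => innerFun F lam Q x ^ q) Q μ := by
  refine Measure.integrableOn_of_bounded (M := (∑ R ∈ F, lam R) ^ q) (hfin Q hQ)
    ((measurable_innerFun hM Q).pow_const q).aestronglyMeasurable (ae_of_all _ fun x => ?_)
  have h0 := innerFun_nonneg hl Q x
  rw [Real.norm_of_nonneg (by positivity)]
  exact Real.rpow_le_rpow h0 (innerFun_le hl Q x) hq.le

theorem integrable_sum_indicator (hM : ∀ Q ∈ F, MeasurableSet Q) (c : Set X → X → ℝ)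
    (hc : ∀ Q ∈ F, IntegrableOn (c Q) Q μ) :
    Integrable (fun x => ∑ Q ∈ F, lam Q * Q.indicator (c Q) x) μ :=
  integrable_finsetSum _ fun Q hQ => ((integrable_indicator_iff (hM Q hQ)).2 (hc Q hQ)).const_mul _

theorem integral_sum_indicator (hM : ∀ Q ∈ F, MeasurableSet Q) (c : Set X → X → ℝ)
    (hc : ∀ Q ∈ F, IntegrableOn (c Q) Q μ) :
    ∫ x, ∑ Q ∈ F, lam Q * Q.indicator (c Q) x ∂μ = ∑ Q ∈ F, lam Q * ∫ x in Q, c Q x ∂μ := by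
  rw [integral_finsetSum _ fun Q hQ =>
    ((integrable_indicator_iff (hM Q hQ)).2 (hc Q hQ)).const_mul _]
  refine Finset.sum_congr rfl fun Q hQ => ?_
  rw [integral_const_mul, integral_indicator (hM Q hQ)]

theorem integral_outer (hM : ∀ Q ∈ F, MeasurableSet Q) (hfin : ∀ Q ∈ F, μ Q ≠ ∞) (p : ℝ) :
    ∫ x, ∑ Q ∈ F, lam Q * Q.indicator (fun _ => outerSum F lam Q ^ (p - 1)) x ∂μ
      = outerEnergy F lam μ.real p := by
  rw [integral_sum_indicator hM (fun Q _ => outerSum F lam Q ^ (p - 1))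
    (fun Q hQ => integrableOn_const (hfin Q hQ)), outerEnergy]
  refine Finset.sum_congr rfl fun Q _ => ?_
  rw [setIntegral_const, smul_eq_mul]; ring

theorem integrable_stepFun_rpow (hM : ∀ Q ∈ F, MeasurableSet Q) (hfin : ∀ Q ∈ F, μ Q ≠ ∞)
    (hF : Laminar F) (hl : ∀ Q ∈ F, 0 < lam Q) {p : ℝ} (hp : 1 < p) :
    Integrable (fun x => stepFun F lam x ^ p) μ := by
  refine Integrable.mono' (g := fun x => p * ∑ Q ∈ F, lam Q *
    Q.indicator (fun _ => outerSum F lam Q ^ (p - 1)) x)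
    ((integrable_sum_indicator hM _ fun Q hQ => integrableOn_const (hfin Q hQ)).const_mul _)
    ((measurable_stepFun hM).pow_const p).aestronglyMeasurable (ae_of_all _ fun x => ?_)
  have := stepFun_nonneg hl x
  rw [Real.norm_of_nonneg (by positivity)]
  exact stepFun_rpow_le hF hl hp x

theorem integral_le_outerEnergy (hM : ∀ Q ∈ F, MeasurableSet Q) (hfin : ∀ Q ∈ F, μ Q ≠ ∞)
    (hF : Laminar F) (hl : ∀ Q ∈ F, 0 < lam Q) {p : ℝ} (hp : 1 < p) :
    ∫ x, stepFun F lam x ^ p ∂μ ≤ p * outerEnergy F lam μ.real p := by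
  rw [← integral_outer hM hfin, ← integral_const_mul]
  exact integral_mono (integrable_stepFun_rpow hM hfin hF hl hp)
    ((integrable_sum_indicator hM _ fun Q hQ => integrableOn_const (hfin Q hQ)).const_mul _)
    (stepFun_rpow_le hF hl hp)

theorem outerEnergy_le_integral (hM : ∀ Q ∈ F, MeasurableSet Q) (hfin : ∀ Q ∈ F, μ Q ≠ ∞)
    (hF : Laminar F) (hl : ∀ Q ∈ F, 0 < lam Q) {p : ℝ} (hp : 1 < p) :
    outerEnergy F lam μ.real p ≤ ∫ x, stepFun F lam x ^ p ∂μ := by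
  rw [← integral_outer hM hfin]
  exact integral_mono
    (integrable_sum_indicator hM _ fun Q hQ => integrableOn_const (hfin Q hQ))
    (integrable_stepFun_rpow hM hfin hF hl hp)
    (outer_pointwise hF hl (fun t => t ^ p) (fun t => t ^ (p - 1))
      (Real.zero_rpow (by linarith)) (mul_rpow_le_sub hp.le))

theorem integral_le_inner (hM : ∀ Q ∈ F, MeasurableSet Q) (hfin : ∀ Q ∈ F, μ Q ≠ ∞)
    (hF : Laminar F) (hl : ∀ Q ∈ F, 0 < lam Q) {p : ℝ} (hp : 1 < p) :
    ∫ x, stepFun F lam x ^ p ∂μ ≤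
      p * ∑ Q ∈ F, lam Q * ∫ x in Q, innerFun F lam Q x ^ (p - 1) ∂μ := by
  classical
  have hi : ∀ Q ∈ F, IntegrableOn (fun x => innerFun F lam Q x ^ (p - 1)) Q μ :=
    fun Q hQ => integrableOn_innerFun_rpow hM hfin hl (by linarith) hQ
  rw [← integral_sum_indicator hM (fun Q x => innerFun F lam Q x ^ (p - 1)) hi,
    ← integral_const_mul]
  refine integral_mono (integrable_stepFun_rpow hM hfin hF hl hp)
    ((integrable_sum_indicator hM _ hi).const_mul _) fun x => ?_
  have := inner_pointwise hF hl (fun t => - t ^ p) (fun t => - (p * t ^ (p - 1)))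
    (by simp [Real.zero_rpow (show p ≠ 0 by linarith)])
    (fun a b ha hb => by have := sub_le_mul_rpow hp.le a b ha hb; linarith) x
  dsimp only
  rw [sum_mul_indicator F lam (fun Q y => innerFun F lam Q y ^ (p - 1)), Finset.mul_sum]
  rw [sum_mul_indicator F lam (fun Q y => - (p * innerFun F lam Q y ^ (p - 1)))] at this
  rw [← neg_le_neg_iff, ← Finset.sum_neg_distrib]
  exact le_trans (le_of_eq (Finset.sum_congr rfl fun _ _ => by ring)) this

theorem inner_le_integral (hM : ∀ Q ∈ F, MeasurableSet Q) (hfin : ∀ Q ∈ F, μ Q ≠ ∞)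
    (hF : Laminar F) (hl : ∀ Q ∈ F, 0 < lam Q) {p : ℝ} (hp : 1 < p) :
    ∑ Q ∈ F, lam Q * ∫ x in Q, innerFun F lam Q x ^ (p - 1) ∂μ ≤
      ∫ x, stepFun F lam x ^ p ∂μ := by
  have hi : ∀ Q ∈ F, IntegrableOn (fun x => innerFun F lam Q x ^ (p - 1)) Q μ :=
    fun Q hQ => integrableOn_innerFun_rpow hM hfin hl (by linarith) hQ
  rw [← integral_sum_indicator hM (fun Q x => innerFun F lam Q x ^ (p - 1)) hi]
  exact integral_mono (integrable_sum_indicator hM _ hi)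
    (integrable_stepFun_rpow hM hfin hF hl hp)
    (inner_pointwise hF hl (fun t => t ^ p) (fun t => t ^ (p - 1))
      (Real.zero_rpow (by linarith)) (mul_rpow_le_sub hp.le))

theorem setAverage_innerFun (hM : ∀ Q ∈ F, MeasurableSet Q) (hfin : ∀ Q ∈ F, μ Q ≠ ∞)
    {Q : Set X} (hQ : Q ∈ F) :
    ⨍ x in Q, innerFun F lam Q x ∂μ = innerAvg F lam μ.real Q := by
  classical
  have : Fact (μ Q < ∞) := ⟨(hfin Q hQ).lt_top⟩
  rw [setAverage_eq, smul_eq_mul, innerAvg, innerMass]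
  congr 1
  unfold innerFun
  have hM' : ∀ R ∈ F.filter (· ⊆ Q), MeasurableSet R := fun R hR => hM R (Finset.mem_filter.1 hR).1
  rw [integral_sum_indicator (F := F.filter (· ⊆ Q)) hM' (fun _ => 1)
    (fun R _ => by
      have : IsFiniteMeasure ((μ.restrict Q).restrict R) := inferInstance
      exact integrable_const (μ := (μ.restrict Q).restrict R) (1 : ℝ))]
  refine Finset.sum_congr rfl fun R hR => ?_
  have hs := (Finset.mem_filter.1 hR).2
  rw [Measure.restrict_restrict (hM' R hR), inter_eq_left.2 hs]
  simp

theorem mul_setAverage (hfin : ∀ Q ∈ F, μ Q ≠ ∞) (h0 : ∀ Q ∈ F, μ Q ≠ 0) {Q : Set X} (hQ : Q ∈ F)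
    (g : X → ℝ) : (⨍ x in Q, g x ∂μ) * μ.real Q = ∫ x in Q, g x ∂μ := by
  have : μ.real Q ≠ 0 := by
    rw [Measure.real, ENNReal.toReal_ne_zero]; exact ⟨h0 Q hQ, hfin Q hQ⟩
  rw [setAverage_eq, smul_eq_mul]; field_simp

/-- Jensen's inequality on each `Q`, for the concave power `p - 1 ≤ 1`. -/
theorem innerFun_rpow_le_of_le_two (hM : ∀ Q ∈ F, MeasurableSet Q) (hfin : ∀ Q ∈ F, μ Q ≠ ∞)
    (h0 : ∀ Q ∈ F, μ Q ≠ 0) (hl : ∀ Q ∈ F, 0 < lam Q) {p : ℝ} (hp : 1 < p) (hp2 : p ≤ 2) :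
    ∑ Q ∈ F, lam Q * ∫ x in Q, innerFun F lam Q x ^ (p - 1) ∂μ ≤ innerEnergy F lam μ.real p := by
  rw [innerEnergy]
  refine Finset.sum_le_sum fun Q hQ => ?_
  rw [mul_assoc]
  refine mul_le_mul_of_nonneg_left ?_ (hl Q hQ).le
  rw [← setAverage_innerFun hM hfin hQ, ← mul_setAverage hfin h0 hQ]
  refine mul_le_mul_of_nonneg_right ?_ measureReal_nonneg
  refine (Real.concaveOn_rpow (by linarith) (by linarith)).le_map_set_average
    (Real.continuous_rpow_const (by linarith)).continuousOn isClosed_Ici (h0 Q hQ) (hfin Q hQ)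
    (ae_of_all _ fun x => innerFun_nonneg hl Q x) ?_
    (integrableOn_innerFun_rpow hM hfin hl (by linarith) hQ)
  simpa using integrableOn_innerFun_rpow hM hfin hl one_pos hQ

/-- Jensen's inequality on each `Q`, for the convex power `p - 1 ≥ 1`. -/
theorem le_innerFun_rpow_of_two_le (hM : ∀ Q ∈ F, MeasurableSet Q) (hfin : ∀ Q ∈ F, μ Q ≠ ∞)
    (h0 : ∀ Q ∈ F, μ Q ≠ 0) (hl : ∀ Q ∈ F, 0 < lam Q) {p : ℝ} (hp2 : 2 ≤ p) :
    innerEnergy F lam μ.real p ≤ ∑ Q ∈ F, lam Q * ∫ x in Q, innerFun F lam Q x ^ (p - 1) ∂μ := by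
  rw [innerEnergy]
  refine Finset.sum_le_sum fun Q hQ => ?_
  rw [mul_assoc]
  refine mul_le_mul_of_nonneg_left ?_ (hl Q hQ).le
  rw [← setAverage_innerFun hM hfin hQ, ← mul_setAverage hfin h0 hQ]
  refine mul_le_mul_of_nonneg_right ?_ measureReal_nonneg
  refine (convexOn_rpow (by linarith)).map_set_average_le
    (Real.continuous_rpow_const (by linarith)).continuousOn isClosed_Ici (h0 Q hQ) (hfin Q hQ)
    (ae_of_all _ fun x => innerFun_nonneg hl Q x) ?_
    (integrableOn_innerFun_rpow hM hfin hl (by linarith) hQ)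
  simpa using integrableOn_innerFun_rpow hM hfin hl one_pos hQ

/-- The equivalence for a finite laminar family in an arbitrary measure space. -/
theorem integral_equiv_innerEnergy {p : ℝ} (hp : 1 < p) :
    ∃ A B : ℝ, 0 < A ∧ 0 < B ∧ ∀ {X : Type*} [MeasurableSpace X] (μ : Measure X)
      (F : Finset (Set X)) (lam : Set X → ℝ), (∀ Q ∈ F, MeasurableSet Q) → (∀ Q ∈ F, μ Q ≠ ∞) →
      (∀ Q ∈ F, μ Q ≠ 0) → (∀ Q ∈ F, 0 < lam Q) → Laminar F →
      innerEnergy F lam μ.real p ≤ A * ∫ x, stepFun F lam x ^ p ∂μ ∧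
      ∫ x, stepFun F lam x ^ p ∂μ ≤ B * innerEnergy F lam μ.real p := by
  have hp1 : 0 < p - 1 := by linarith
  have hreal : ∀ {X : Type _} [MeasurableSpace X] (μ : Measure X) (F : Finset (Set X)),
      (∀ Q ∈ F, μ Q ≠ ∞) → (∀ Q ∈ F, μ Q ≠ 0) → ∀ Q ∈ F, 0 < μ.real Q :=
    fun μ F h h' Q hQ => ENNReal.toReal_pos (h' Q hQ) (h Q hQ)
  have hne : ∀ {X : Type _} [MeasurableSpace X] (μ : Measure X) (F : Finset (Set X)),
      (∀ Q ∈ F, μ Q ≠ 0) → ∀ Q ∈ F, Q.Nonempty :=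
    fun μ F h Q hQ => nonempty_of_measure_ne_zero (h Q hQ)
  -- The two ranges of `p` exchange the roles of the inner and the outer summation.
  rcases le_total p 2 with h2 | h2
  · refine ⟨1 + (p - 1)⁻¹, p, by positivity, by linarith, ?_⟩
    intro X _ μ F lam hM hfin h0 hl hF
    constructor
    · refine (innerEnergy_le_outerEnergy hp h2 hF (hne μ F h0) hl (hreal μ F hfin h0)).trans ?_
      exact mul_le_mul_of_nonneg_left (outerEnergy_le_integral hM hfin hF hl hp) (by positivity)
    · refine (integral_le_inner hM hfin hF hl hp).trans ?_
      exact mul_le_mul_of_nonneg_left (innerFun_rpow_le_of_le_two hM hfin h0 hl hp h2) (by linarith)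
  · refine ⟨1, p * ((2 * (p - 1)) * (2 * (p - 1)) ^ (p - 2)), one_pos, by positivity, ?_⟩
    intro X _ μ F lam hM hfin h0 hl hF
    constructor
    · rw [one_mul]
      exact (le_innerFun_rpow_of_two_le hM hfin h0 hl h2).trans
        (inner_le_integral hM hfin hF hl hp)
    · refine (integral_le_outerEnergy hM hfin hF hl hp).trans ?_
      rw [mul_assoc p]
      exact mul_le_mul_of_nonneg_left
        (outerEnergy_le_innerEnergy h2 hF (hne μ F h0) hl (hreal μ F hfin h0)) (by linarith)

end Integral

/-! ### Dyadic cubes and the weighted measure -/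

section Dyadic

variable {d : ℕ}

/-- Of two dyadic subcubes of one cube, the one of the later generation is contained in the other or
disjoint from it. -/
theorem dyadic_subset_or_disjoint {a : Rd d} {l : ℝ} (hl : 0 < l) {k k' : ℕ} (hk : k ≤ k')
    (m m' : Fin d → ℕ) :
    (Set.univ.pi fun i => Set.Ico (a i + l * m' i / 2 ^ k') (a i + l * (m' i + 1) / 2 ^ k')) ⊆
      (Set.univ.pi fun i => Set.Ico (a i + l * m i / 2 ^ k) (a i + l * (m i + 1) / 2 ^ k)) ∨
    Disjoint (Set.univ.pi fun i => Set.Ico (a i + l * m i / 2 ^ k) (a i + l * (m i + 1) / 2 ^ k))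
      (Set.univ.pi fun i =>
        Set.Ico (a i + l * m' i / 2 ^ k') (a i + l * (m' i + 1) / 2 ^ k')) := by
  rw [or_iff_not_imp_right, Set.not_disjoint_iff]
  rintro ⟨x, hx, hx'⟩
  refine Set.pi_mono fun i _ => ?_
  obtain ⟨h1, h2⟩ := hx i trivial
  obtain ⟨h3, h4⟩ := hx' i trivial
  obtain ⟨n, rfl⟩ := Nat.exists_eq_add_of_le hk
  -- Endpoints are compared as integers on the common grid of step `l / 2 ^ (k + n)`.
  have e : ∀ t : ℝ, l * t / 2 ^ k = l * (t * 2 ^ n) / 2 ^ (k + n) := fun t => by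
    rw [pow_add]; field_simp
  have cmp : ∀ s t : ℝ, l * s / 2 ^ (k + n) < l * t / 2 ^ (k + n) → s < t := fun s t h =>
    lt_of_mul_lt_mul_left ((div_lt_div_iff_of_pos_right (by positivity)).1 h) hl.le
  have c1 : m i * 2 ^ n < m' i + 1 := by
    have := cmp (m i * 2 ^ n) (m' i + 1) (by rw [← e]; linarith)
    exact_mod_cast this
  have c2 : m' i < (m i + 1) * 2 ^ n := by
    have := cmp (m' i) ((m i + 1) * 2 ^ n) (by rw [← e]; linarith)
    exact_mod_cast this
  have c1' : (m i * 2 ^ n : ℝ) ≤ m' i := by exact_mod_cast Nat.lt_succ_iff.1 c1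
  have c2' : (m' i + 1 : ℝ) ≤ (m i + 1) * 2 ^ n := by exact_mod_cast c2
  rw [e, e]
  refine Set.Ico_subset_Ico ?_ ?_ <;> gcongr

theorem DyadicLattice.nested (𝒟 : DyadicLattice d) {Q R : Set (Rd d)} (hQ : Q ∈ 𝒟.cubes)
    (hR : R ∈ 𝒟.cubes) : Q ⊆ R ∨ R ⊆ Q ∨ Disjoint Q R := by
  obtain ⟨a, l, hl, -, ⟨k, m, -, rfl⟩, ⟨k', m', -, rfl⟩⟩ := 𝒟.common_ancestor Q hQ R hR
  rcases le_total k k' with h | h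
  · exact Or.inr (dyadic_subset_or_disjoint hl h m m')
  · rcases dyadic_subset_or_disjoint (a := a) hl h m' m with h | h
    · exact Or.inl h
    · exact Or.inr (Or.inr h.symm)

theorem IsCube.measurableSet {Q : Set (Rd d)} (h : IsCube Q) : MeasurableSet Q := by
  obtain ⟨a, l, -, rfl⟩ := h
  exact MeasurableSet.univ_pi fun _ => measurableSet_Ico

theorem IsCube.volume_ne_zero {Q : Set (Rd d)} (h : IsCube Q) : volume Q ≠ 0 := by
  obtain ⟨a, l, hl, rfl⟩ := h
  rw [volume_pi_pi]
  exact Finset.prod_ne_zero_iff.2 fun i _ => by simp [hl]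

theorem IsCube.subset_Icc {Q : Set (Rd d)} (h : IsCube Q) : ∃ a b : Rd d, Q ⊆ Set.Icc a b := by
  obtain ⟨a, l, -, rfl⟩ := h
  exact ⟨a, fun i => a i + l, fun x hx =>
    ⟨fun i => (hx i trivial).1, fun i => (hx i trivial).2.le⟩⟩

/-- The measure `w dx`. The density is truncated to `ℝ≥0`, which changes nothing for `w > 0`. -/
def weightMeasure (w : Rd d → ℝ) : Measure (Rd d) :=
  volume.withDensity fun x => ((w x).toNNReal : ℝ≥0∞)

theorem integral_weightMeasure {w : Rd d → ℝ} (hw : IsWeightOn w) (g : Rd d → ℝ) :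
    ∫ x, g x ∂weightMeasure w = ∫ x, g x * w x := by
  rw [weightMeasure, integral_withDensity_eq_integral_smul hw.1.real_toNNReal]
  refine integral_congr_ae (ae_of_all _ fun x => ?_)
  simp [NNReal.smul_def, (hw.2 x).le, mul_comm]

theorem weightMeasure_real {w : Rd d → ℝ} (hw : IsWeightOn w) {Q : Set (Rd d)}
    (hQ : MeasurableSet Q) : (weightMeasure w).real Q = ∫ x in Q, w x := by
  rw [← integral_indicator_one hQ, integral_weightMeasure hw, ← integral_indicator hQ]
  refine integral_congr_ae (ae_of_all _ fun x => ?_)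
  by_cases h : x ∈ Q <;> simp [h]

theorem weightMeasure_ne_zero {w : Rd d → ℝ} (hw : IsWeightOn w) {Q : Set (Rd d)}
    (hQ : IsCube Q) : weightMeasure w Q ≠ 0 := by
  rw [weightMeasure, Ne, withDensity_apply_eq_zero' hw.1.real_toNNReal.coe_nnreal_ennreal.aemeasurable]
  have : {x | ((w x).toNNReal : ℝ≥0∞) ≠ 0} = Set.univ := by
    ext x; simp [hw.2 x]
  rw [this, univ_inter]
  exact hQ.volume_ne_zero

theorem weightMeasure_ne_top {w : Rd d → ℝ} (hloc : LocallyIntegrable w volume)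
    {Q : Set (Rd d)} (hQ : IsCube Q) : weightMeasure w Q ≠ ∞ := by
  obtain ⟨a, b, hab⟩ := hQ.subset_Icc
  have hi : IntegrableOn w Q := (hloc.integrableOn_isCompact isCompact_Icc).mono_set hab
  rw [weightMeasure, withDensity_apply _ hQ.measurableSet]
  exact hi.lintegral_lt_top.ne

end Dyadic

/-- The Cascante–Ortega–Verbitsky equivalence (2.2). -/
theorem stmt13 (d : ℕ) (p : ℝ) (hp : 1 < p) :
    ∃ c C : ℝ, 0 < c ∧ 0 < C ∧
      ∀ (𝒟 : DyadicLattice d) (w : Rd d → ℝ), IsWeightOn w →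
        LocallyIntegrable w volume →
      ∀ lam : Set (Rd d) → ℝ, (∀ Q, 0 ≤ lam Q) → {Q | lam Q ≠ 0}.Finite →
        (∀ Q, lam Q ≠ 0 → Q ∈ 𝒟.cubes) →
      ∀ L R : ℝ,
        L = (∫ x, (∑ᶠ Q ∈ 𝒟.cubes, lam Q * Q.indicator 1 x) ^ p * w x) ^ (1 / p) →
        R = (∑ᶠ Q ∈ 𝒟.cubes, lam Q *
              ((∫ x in Q, w x)⁻¹ *
                ∑ᶠ Q' ∈ {Q' ∈ 𝒟.cubes | Q' ⊆ Q}, lam Q' * ∫ x in Q', w x) ^ (p - 1) *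
              ∫ x in Q, w x) ^ (1 / p) →
        c * R ≤ L ∧ L ≤ C * R := by
  obtain ⟨A, B, hA, hB, key⟩ := integral_equiv_innerEnergy.{0} hp
  refine ⟨(A ^ (1 / p))⁻¹, B ^ (1 / p), by positivity, by positivity, ?_⟩
  intro 𝒟 w hw hloc lam hl0 hfinite hmem L R hL hR
  classical
  set F := hfinite.toFinset with hFdef
  have hFmem : ∀ Q, Q ∈ F ↔ lam Q ≠ 0 := fun Q => by simp [hFdef]
  have hcube : ∀ Q ∈ F, Q ∈ 𝒟.cubes := fun Q hQ => hmem Q ((hFmem Q).1 hQ)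
  have hM : ∀ Q ∈ F, MeasurableSet Q := fun Q hQ => (𝒟.isCube Q (hcube Q hQ)).measurableSet
  have hl : ∀ Q ∈ F, 0 < lam Q := fun Q hQ => (hl0 Q).lt_of_ne' ((hFmem Q).1 hQ)
  obtain ⟨h1, h2⟩ := key (weightMeasure w) F lam hM
    (fun Q hQ => weightMeasure_ne_top hloc (𝒟.isCube Q (hcube Q hQ)))
    (fun Q hQ => weightMeasure_ne_zero hw (𝒟.isCube Q (hcube Q hQ))) hl
    (fun Q hQ R hR => 𝒟.nested (hcube Q hQ) (hcube R hR))
  have hLI : L = (∫ x, stepFun F lam x ^ p ∂weightMeasure w) ^ (1 / p) := by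
    rw [hL, integral_weightMeasure hw]
    congr 2
    ext x
    rw [finsum_mem_eq_of_finset 𝒟.cubes F _
      (fun Q _ h => (hFmem Q).2 (left_ne_zero_of_mul h)) hcube, stepFun]
  have hRV : R = innerEnergy F lam (weightMeasure w).real p ^ (1 / p) := by
    rw [hR, finsum_mem_eq_of_finset 𝒟.cubes F _
      (fun Q _ h => (hFmem Q).2 (left_ne_zero_of_mul (left_ne_zero_of_mul h))) hcube, innerEnergy]
    congr 1
    refine Finset.sum_congr rfl fun Q hQ => ?_
    rw [finsum_mem_eq_of_finset {Q' ∈ 𝒟.cubes | Q' ⊆ Q} (F.filter (· ⊆ Q)) _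
      (fun Q' h' h => Finset.mem_filter.2 ⟨(hFmem Q').2 (left_ne_zero_of_mul h), h'.2⟩)
      (fun Q' h' => ⟨hcube Q' (Finset.mem_filter.1 h').1, (Finset.mem_filter.1 h').2⟩),
      ← weightMeasure_real hw (hM Q hQ), innerAvg, innerMass]
    congr 4
    refine Finset.sum_congr rfl fun Q' h' => ?_
    rw [weightMeasure_real hw (hM Q' (Finset.mem_filter.1 h').1)]
  have hI0 : 0 ≤ ∫ x, stepFun F lam x ^ p ∂weightMeasure w :=
    integral_nonneg fun x => Real.rpow_nonneg (stepFun_nonneg hl x) _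
  have hV0 : 0 ≤ innerEnergy F lam (weightMeasure w).real p := by
    by_contra h
    have := mul_neg_of_pos_of_neg hB (not_le.1 h)
    linarith
  have hp0 : 0 ≤ 1 / p := by positivity
  rw [hLI, hRV]
  constructor
  · rw [inv_mul_le_iff₀ (by positivity), ← Real.mul_rpow hA.le hI0]
    exact Real.rpow_le_rpow hV0 h1 hp0
  · rw [← Real.mul_rpow hB.le hV0]
    exact Real.rpow_le_rpow hI0 h2 hp0
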